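/- arXiv:2601.05583 — 5 statements merged into one kernel-verified Lean document; each statement's English description precedes it below -/
import Mathlib

section
/- Let X be a set, J : X → X a map, N a natural number, and S ⊆ X a set of initial points. For a map T : X → X define D(T) = { T^[t](x₀) : x₀ ∈ S, 0 ≤ t ≤ N } and D* = { J^[t](x₀) : x₀ ∈ S, 0 ≤ t ≤ N }. Let (T_k)_{k≥0} be a sequence of maps X → X such that for every k, T_{k+1}(x) = J(x) for all x ∈ D(T_k). Then for every k, every x₀ ∈ S, and every t with 0 ≤ t ≤ min(k, N), one has T_k^[t](x₀) = J^[t](x₀). In particular, D(T_k) = D* for all k ≥ N, i.e., the generated datasets converge to the exact dataset in at most N steps. -/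
/-- The dataset generated by iterating the map `T` up to `N` times from initial points in `S`. -/
def generatedDataset {X : Type*} (T : X → X) (N : ℕ) (S : Set X) : Set X :=
  {y | ∃ x₀ ∈ S, ∃ t ≤ N, y = T^[t] x₀}

/-- Error-free Learn-to-Evolve: if each operator `T (k+1)` agrees with the exact operator `J`
on the dataset generated by `T k`, then for every `k`, the iterates of `T k` from initial
points agree with those of `J` up to time `min k N`; in particular, the generated datasets
equal the exact dataset for all `k ≥ N`. -/
theorem learn_to_evolve_error_free {X : Type*} (J : X → X) (N : ℕ) (S : Set X)
    (T : ℕ → X → X)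
    (hT : ∀ k, ∀ x ∈ generatedDataset (T k) N S, T (k + 1) x = J x) :
    (∀ k, ∀ x₀ ∈ S, ∀ t ≤ min k N, (T k)^[t] x₀ = J^[t] x₀) ∧
      ∀ k, N ≤ k → generatedDataset (T k) N S = generatedDataset J N S := by
  have h1 : ∀ k, ∀ x₀ ∈ S, ∀ t ≤ min k N, (T k)^[t] x₀ = J^[t] x₀ := by
    intro k
    induction k with
    | zero =>
      intro x₀ _ t ht
      have h0 : t = 0 := by omega
      subst h0
      rfl
    | succ k ih =>
      intro x₀ hx t
      induction t with
      | zero => intro _; rfl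
      | succ t iht =>
        intro ht
        rw [Function.iterate_succ_apply', Function.iterate_succ_apply', iht (by omega)]
        exact hT k _ ⟨x₀, hx, t, by omega, (ih x₀ hx t (by omega)).symm⟩
  refine ⟨h1, fun k hk => ?_⟩
  ext y
  constructor
  · rintro ⟨x₀, hx, t, ht, rfl⟩
    exact ⟨x₀, hx, t, ht, h1 k x₀ hx t (by omega)⟩
  · rintro ⟨x₀, hx, t, ht, rfl⟩
    exact ⟨x₀, hx, t, ht, (h1 k x₀ hx t (by omega)).symm⟩
end

section
/- Let (X, d) be a metric space, λ > 0, γ > 0. Let J : X → X satisfy d(J(x), J(y)) ≤ λ·d(x, y) for all x, y ∈ X, and let (T_k)_{k≥0} be a sequence of maps X → X each satisfying d(T_k(x), T_k(y)) ≤ γ·d(x, y) for all x, y ∈ X. Fix x₀ ∈ X and define trajectories ρ^{k,0} = x₀, ρ^{k,t+1} = T_k(ρ^{k,t}), and ρ^{*,0} = x₀, ρ^{*,t+1} = J(ρ^{*,t}), and training errors ε^{k,t} := d(T_{k+1}(ρ^{k,t}), J(ρ^{k,t})). Then for all k ≥ 1 and all t ≥ 1: d(ρ^{k,t}, ρ^{*,t})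 ≤ (λ + γ)·d(ρ^{k−1,t−1}, ρ^{*,t−1}) + ε^{k−1,t−1} + γ·d(ρ^{k,t−1}, ρ^{*,t−1}). -/
/-- Recursive error estimate for the Learn-to-Evolve iteration: if the exact operator `J`
is `lam`-Lipschitz and each learned operator `T k` is `gam`-Lipschitz, then the distance
between the generated trajectory `ρ` and the exact trajectory `ρs` satisfies
`d(ρ^{k,t}, ρ^{*,t}) ≤ (lam+gam)·d(ρ^{k-1,t-1}, ρ^{*,t-1}) + ε^{k-1,t-1}
  + gam·d(ρ^{k,t-1}, ρ^{*,t-1})` for all `k ≥ 1`, `t ≥ 1` (here reindexed via `k+1`, `t+1`). -/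
theorem learn_to_evolve_recursive_estimate {X : Type*} [MetricSpace X]
    (lam gam : ℝ) (hlam : 0 < lam) (hgam : 0 < gam)
    (J : X → X) (hJ : ∀ x y, dist (J x) (J y) ≤ lam * dist x y)
    (T : ℕ → X → X) (hT : ∀ k x y, dist (T k x) (T k y) ≤ gam * dist x y)
    (x₀ : X) (ρ : ℕ → ℕ → X) (ρs : ℕ → X)
    (hρ0 : ∀ k, ρ k 0 = x₀) (hρ : ∀ k t, ρ k (t + 1) = T k (ρ k t))
    (hρs0 : ρs 0 = x₀) (hρs : ∀ t, ρs (t + 1) = J (ρs t))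
    (ε : ℕ → ℕ → ℝ) (hε : ∀ k t, ε k t = dist (T (k + 1) (ρ k t)) (J (ρ k t))) :
    ∀ k t, dist (ρ (k + 1) (t + 1)) (ρs (t + 1)) ≤
      (lam + gam) * dist (ρ k t) (ρs t) + ε k t + gam * dist (ρ (k + 1) t) (ρs t) := by
  intro k t
  rw [hρ, hρs, hε]
  have h1 := hT (k + 1) (ρ (k + 1) t) (ρs t)
  have h2 := hT (k + 1) (ρs t) (ρ k t)
  have h3 := hJ (ρ k t) (ρs t)
  have t1 := dist_triangle (T (k + 1) (ρ (k + 1) t)) (T (k + 1) (ρs t)) (J (ρs t))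
  have t2 := dist_triangle (T (k + 1) (ρs t)) (T (k + 1) (ρ k t)) (J (ρs t))
  have t3 := dist_triangle (T (k + 1) (ρ k t)) (J (ρ k t)) (J (ρs t))
  rw [dist_comm (ρs t) (ρ k t)] at h2
  linarith
end

section
/- Let (X, d) be a metric space, λ > 0, γ > 0. Let J : X → X satisfy d(J(x), J(y)) ≤ λ·d(x, y) for all x, y ∈ X, and let (T_k)_{k≥0} be a sequence of maps X → X each satisfying d(T_k(x), T_k(y)) ≤ γ·d(x, y) for all x, y ∈ X. Fix x₀ ∈ X and define ρ^{k,0} = x₀, ρ^{k,t+1} = T_k(ρ^{k,t}), ρ^{*,0} = x₀, ρ^{*,t+1} = J(ρ^{*,t}), and ε^{k,t} := d(T_{k+1}(ρ^{k,t}), J(ρ^{k,t})). Fix t ≥ 1. If for every s with 0 ≤ s ≤ t−1 the training errors satisfy ε^{k,s} → 0 as k → ∞, then d(ρ^{k,t}, ρ^{*,t}) → 0 as k → ∞. -/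
open Filter Topology

/-- Convergence of the Learn-to-Evolve trajectories: if the exact operator `J` is
`lam`-Lipschitz, each learned operator `T k` is `gam`-Lipschitz, and the training errors
`ε k s` tend to `0` as `k → ∞` for every time `s < t`, then the generated trajectory point
at time `t` converges to the exact trajectory point at time `t`. -/
theorem learn_to_evolve_convergence {X : Type*} [MetricSpace X]
    (lam gam : ℝ) (hlam : 0 < lam) (hgam : 0 < gam)
    (J : X → X) (hJ : ∀ x y, dist (J x) (J y) ≤ lam * dist x y)
    (T : ℕ → X → X) (hT : ∀ k x y, dist (T k x) (T k y) ≤ gam * dist x y)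
    (x₀ : X) (ρ : ℕ → ℕ → X) (ρs : ℕ → X)
    (hρ0 : ∀ k, ρ k 0 = x₀) (hρ : ∀ k t, ρ k (t + 1) = T k (ρ k t))
    (hρs0 : ρs 0 = x₀) (hρs : ∀ t, ρs (t + 1) = J (ρs t))
    (ε : ℕ → ℕ → ℝ) (hε : ∀ k t, ε k t = dist (T (k + 1) (ρ k t)) (J (ρ k t)))
    (t : ℕ) (ht : 1 ≤ t)
    (herr : ∀ s, s < t → Tendsto (fun k => ε k s) atTop (𝓝 0)) :
    Tendsto (fun k => dist (ρ k t) (ρs t)) atTop (𝓝 0) := by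
  have key : ∀ s, s ≤ t → Tendsto (fun k => dist (ρ k s) (ρs s)) atTop (𝓝 0) := by
    intro s
    induction s with
    | zero =>
      intro _
      simp [hρ0, hρs0]
    | succ s ih =>
      intro hs
      have h0 := ih (by omega)
      have h1 : Tendsto (fun k => dist (ρ (k + 1) s) (ρs s)) atTop (𝓝 0) :=
        (tendsto_add_atTop_iff_nat (f := fun k => dist (ρ k s) (ρs s)) 1).2 h0
      have he := herr s (by omega)
      have hb : Tendsto (fun k => gam * (dist (ρ (k + 1) s) (ρs s) + dist (ρ k s) (ρs s))
          + ε k s + lam * dist (ρ k s) (ρs s)) atTop (𝓝 0) := by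
        simpa using (((h1.add h0).const_mul gam).add he).add (h0.const_mul lam)
      rw [← tendsto_add_atTop_iff_nat 1]
      refine squeeze_zero (fun _ => dist_nonneg) (fun k => ?_) hb
      rw [hρ, hρs, hε]
      have a1 := dist_triangle4 (T (k + 1) (ρ (k + 1) s)) (T (k + 1) (ρ k s))
        (J (ρ k s)) (J (ρs s))
      have a2 := hT (k + 1) (ρ (k + 1) s) (ρ k s)
      have a3 := mul_le_mul_of_nonneg_left
        (dist_triangle_right (ρ (k + 1) s) (ρ k s) (ρs s)) hgam.le
      have a4 := hJ (ρ k s) (ρs s)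
      linarith
  exact key t le_rfl
end

section
/- Let n ≥ 1 and let C be a real n×n matrix such that I + C is symmetric positive definite and the operator norm ‖C‖ (induced by the Euclidean norm on ℝⁿ) satisfies ‖C‖ < 1. Then |det(I + C) − e^{tr(C)}| ≤ e^{tr(C)} · n‖C‖² / (1 − ‖C‖). -/
/-- The operator norm of a real square matrix induced by the Euclidean norm on `ℝⁿ`. -/
noncomputable def euclideanOpNorm {n : ℕ} (C : Matrix (Fin n) (Fin n) ℝ) : ℝ :=
  ‖Matrix.toEuclideanCLM (𝕜 := ℝ) C‖

/-- Quantitative form of Lemma 4.1: if `I + C` is symmetric positive definite and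
`‖C‖ < 1` in the Euclidean operator norm, then
`|det (I + C) − e^{tr C}| ≤ e^{tr C} · n‖C‖² / (1 − ‖C‖)`. -/
theorem det_sub_exp_trace_bound {n : ℕ} (hn : 1 ≤ n) (C : Matrix (Fin n) (Fin n) ℝ)
    (hpos : ((1 : Matrix (Fin n) (Fin n) ℝ) + C).PosDef)
    (hnorm : euclideanOpNorm C < 1) :
    |((1 : Matrix (Fin n) (Fin n) ℝ) + C).det - Real.exp C.trace| ≤
      Real.exp C.trace * (n * euclideanOpNorm C ^ 2) / (1 - euclideanOpNorm C) := by
  have hH := hpos.isHermitian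
  set m : Fin n → ℝ := hH.eigenvalues with hm
  have hmpos : ∀ i, 0 < m i := fun i => hpos.eigenvalues_pos i
  have hdet : ((1 : Matrix (Fin n) (Fin n) ℝ) + C).det = ∏ i, m i := by
    simpa using hH.det_eq_prod_eigenvalues
  have htr : C.trace = ∑ i, (m i - 1) := by
    have h := hH.trace_eq_sum_eigenvalues
    rw [Matrix.trace_add, Matrix.trace_one] at h
    simp only [Fintype.card_fin, RCLike.ofReal_real_eq_id, id] at h
    rw [Finset.sum_sub_distrib]
    simp only [Finset.sum_const, Finset.card_univ, Fintype.card_fin, nsmul_eq_mul, mul_one]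
    rw [hm]
    linarith
  have hev : ∀ i, |m i - 1| ≤ euclideanOpNorm C := by
    intro i
    set v := hH.eigenvectorBasis i with hv
    have hv1 : ‖v‖ = 1 := hH.eigenvectorBasis.orthonormal.1 i
    have h := hH.mulVec_eigenvectorBasis i
    have h2 : Matrix.toEuclideanCLM (𝕜 := ℝ) C v = (m i - 1) • v := by
      ext j
      have hj := congrFun h j
      simp only [Matrix.add_mulVec, Matrix.one_mulVec, Pi.add_apply, Pi.smul_apply,
        smul_eq_mul] at hj
      simp only [PiLp.smul_apply, smul_eq_mul, Matrix.ofLp_toEuclideanCLM]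
      linarith
    have h3 := (Matrix.toEuclideanCLM (𝕜 := ℝ) C).le_opNorm v
    rw [h2, norm_smul, hv1, mul_one, mul_one, Real.norm_eq_abs] at h3
    exact h3
  set c := euclideanOpNorm C with hc
  have h1c : 0 < 1 - c := by linarith
  have hlo : ∀ i, 0 ≤ (m i - 1) - Real.log (m i) := fun i => by
    linarith [Real.log_le_sub_one_of_pos (hmpos i)]
  have hhi : ∀ i, (m i - 1) - Real.log (m i) ≤ c ^ 2 / (1 - c) := fun i => by
    have h1 := Real.one_sub_inv_le_log_of_pos (hmpos i)
    have h2 := abs_le.1 (hev i)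
    have h3 : (m i - 1) - (1 - (m i)⁻¹) = (m i - 1) ^ 2 / m i := by
      have := (hmpos i).ne'
      field_simp
    have h4 : (m i - 1) ^ 2 / m i ≤ c ^ 2 / (1 - c) :=
      div_le_div₀ (sq_nonneg c) (sq_le_sq' h2.1 h2.2) h1c (by linarith)
    linarith
  set S := ∑ i, ((m i - 1) - Real.log (m i)) with hS
  have hS0 : 0 ≤ S := Finset.sum_nonneg fun i _ => hlo i
  have hS1 : S ≤ n * (c ^ 2 / (1 - c)) := by
    have := Finset.sum_le_sum (s := Finset.univ) fun i _ => hhi i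
    rw [Finset.sum_const, Finset.card_univ, Fintype.card_fin, nsmul_eq_mul] at this
    exact this
  have hd : ∏ i, m i = Real.exp C.trace * Real.exp (-S) := by
    have hsum : C.trace + -S = ∑ i, Real.log (m i) := by
      rw [htr, hS, ← sub_eq_add_neg, ← Finset.sum_sub_distrib]
      exact Finset.sum_congr rfl fun i _ => by ring
    rw [← Real.exp_add, hsum, Real.exp_sum]
    exact Finset.prod_congr rfl fun i _ => (Real.exp_log (hmpos i)).symm
  have he1 : Real.exp (-S) ≤ 1 := Real.exp_le_one_iff.2 (by linarith)
  have he2 := Real.add_one_le_exp (-S)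
  rw [hdet, hd, abs_sub_comm, abs_of_nonneg (by nlinarith [Real.exp_pos C.trace])]
  calc Real.exp C.trace - Real.exp C.trace * Real.exp (-S)
      = Real.exp C.trace * (1 - Real.exp (-S)) := by ring
    _ ≤ Real.exp C.trace * (n * (c ^ 2 / (1 - c))) :=
        mul_le_mul_of_nonneg_left (by linarith) (Real.exp_pos _).le
    _ = _ := by ring
end

section
/- Let n ≥ 1 and let C be a real n×n matrix such that I + C is symmetric positive definite and the operator norm ‖C‖ (induced by the Euclidean norm on ℝⁿ) satisfies ‖C‖ < 1. Then |log det(I + C) − tr(C)| ≤ n‖C‖² / (1 − ‖C‖). In particular, tr(C) − n‖C‖²/(1−‖C‖) ≤ log det(I + C) ≤ tr(C). -/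
/-- Each eigenvalue of `I + C` is within `‖C‖` of `1`. -/
theorem abs_eigenvalue_sub_one_le {n : ℕ} (C : Matrix (Fin n) (Fin n) ℝ)
    (hA : ((1 : Matrix (Fin n) (Fin n) ℝ) + C).IsHermitian) (i : Fin n) :
    |hA.eigenvalues i - 1| ≤ euclideanOpNorm C := by
  have h := hA.mulVec_eigenvectorBasis i
  have h2 : Matrix.toEuclideanCLM (𝕜 := ℝ) C (hA.eigenvectorBasis i) =
      (hA.eigenvalues i - 1) • hA.eigenvectorBasis i := by
    apply (WithLp.ofLp_injective 2)
    rw [Matrix.ofLp_toEuclideanCLM, WithLp.ofLp_smul, sub_smul, one_smul, ← h, Matrix.add_mulVec,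
      Matrix.one_mulVec]
    simp
  have h3 := (Matrix.toEuclideanCLM (𝕜 := ℝ) C).le_opNorm (hA.eigenvectorBasis i)
  rw [h2, norm_smul, hA.eigenvectorBasis.norm_eq_one, mul_one, mul_one, Real.norm_eq_abs] at h3
  exact h3

/-- Scalar form of the estimate. -/
theorem sub_one_sub_log_le {t c : ℝ} (ht : 0 < t) (hc : c < 1) (h : |t - 1| ≤ c) :
    (t - 1) - Real.log t ≤ c ^ 2 / (1 - c) := by
  have h1 := Real.one_sub_inv_le_log_of_pos ht
  have h2 : (t - 1) - (1 - t⁻¹) = (t - 1) ^ 2 / t := by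
    field_simp
  have h3 : (t - 1) ^ 2 / t ≤ c ^ 2 / (1 - c) := by
    have h5 : (t - 1) ^ 2 ≤ c ^ 2 := sq_le_sq' (abs_le.1 h).1 (abs_le.1 h).2
    have h6 : 1 - c ≤ t := by linarith [(abs_le.1 h).1]
    exact div_le_div₀ (sq_nonneg _) h5 (by linarith) h6
  linarith

/-- Logarithmic form of the estimate in Lemma 4.1: if `I + C` is symmetric positive definite
and `‖C‖ < 1` in the Euclidean operator norm, then
`|log det (I + C) − tr C| ≤ n‖C‖² / (1 − ‖C‖)`; in particular
`tr C − n‖C‖²/(1−‖C‖) ≤ log det (I + C) ≤ tr C`. -/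
theorem log_det_sub_trace_bound {n : ℕ} (hn : 1 ≤ n) (C : Matrix (Fin n) (Fin n) ℝ)
    (hpos : ((1 : Matrix (Fin n) (Fin n) ℝ) + C).PosDef)
    (hnorm : euclideanOpNorm C < 1) :
    |Real.log ((1 : Matrix (Fin n) (Fin n) ℝ) + C).det - C.trace| ≤
        n * euclideanOpNorm C ^ 2 / (1 - euclideanOpNorm C) ∧
      C.trace - n * euclideanOpNorm C ^ 2 / (1 - euclideanOpNorm C) ≤
        Real.log ((1 : Matrix (Fin n) (Fin n) ℝ) + C).det ∧
      Real.log ((1 : Matrix (Fin n) (Fin n) ℝ) + C).det ≤ C.trace := by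
  have hA := hpos.isHermitian
  have hlog : Real.log ((1 : Matrix (Fin n) (Fin n) ℝ) + C).det =
      ∑ i, Real.log (hA.eigenvalues i) := by
    rw [hA.det_eq_prod_eigenvalues]
    exact Real.log_prod (fun i _ => (hpos.eigenvalues_pos i).ne')
  have htr : C.trace = ∑ i, (hA.eigenvalues i - 1) := by
    have h := hA.trace_eq_sum_eigenvalues
    rw [Matrix.trace_add, Matrix.trace_one] at h
    simp only [Finset.sum_sub_distrib, Finset.sum_const, Finset.card_univ, nsmul_eq_mul, mul_one]
    simp only [RCLike.ofReal_real_eq_id, id] at h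
    linarith
  have hup : Real.log ((1 : Matrix (Fin n) (Fin n) ℝ) + C).det ≤ C.trace := by
    rw [hlog, htr]
    exact Finset.sum_le_sum fun i _ => Real.log_le_sub_one_of_pos (hpos.eigenvalues_pos i)
  have hlo : C.trace - Real.log ((1 : Matrix (Fin n) (Fin n) ℝ) + C).det ≤
      n * euclideanOpNorm C ^ 2 / (1 - euclideanOpNorm C) := by
    rw [hlog, htr, ← Finset.sum_sub_distrib]
    refine (Finset.sum_le_sum fun i _ => sub_one_sub_log_le (hpos.eigenvalues_pos i) hnorm
      (abs_eigenvalue_sub_one_le C hA i)).trans (le_of_eq ?_)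
    simp [mul_div_assoc]
  refine ⟨?_, by linarith, hup⟩
  rw [abs_sub_comm, abs_of_nonneg (by linarith)]
  exact hlo
end
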